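/- Let n ≥ 2 be an integer and let Λ ⊂ ℝ² be a closed set that is 2-periodic with respect to the second variable. Let f_1, …, f_n ∈ L¹(ℝ) satisfy f̂_1(ξ) + e^{πiη} f̂_2(ξ) + ⋯ + e^{(n−1)πiη} f̂_n(ξ) = 0 for all (ξ, η) ∈ Λ. If ξ_0 ∈ Π^1(Λ) \ Π^{1*}(Λ), then f̂_j(ξ_0) = 0 for every j = 1, …, n. -/

import Mathlib

open MeasureTheory Complex

/-- Fourier transform with the convention `f̂(ξ) = ∫ e^{πixξ} f(x) dx`. -/
noncomputable def FT (f : ℝ → ℂ) (ξ : ℝ) : ℂ :=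
  ∫ x : ℝ, Complex.exp (Real.pi * Complex.I * x * ξ) * f x

/-- `e^{πiη}`. -/
noncomputable def cexpEta (η : ℝ) : ℂ := Complex.exp (Real.pi * Complex.I * η)

/-- `Λ` is 2-periodic with respect to the second variable. -/
def Periodic2 (Λ : Set (ℝ × ℝ)) : Prop :=
  ∀ ξ η : ℝ, (ξ, η) ∈ Λ ↔ (ξ, η + 2) ∈ Λ

/-- The projection `Π(Λ)` of `Λ` on the x-axis. -/
def proj (Λ : Set (ℝ × ℝ)) : Set ℝ := {ξ | ∃ η : ℝ, (ξ, η) ∈ Λ}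

/-- `Img(ξ) = {η ∈ [0,2) : (ξ,η) ∈ Λ}`. -/
def Img (Λ : Set (ℝ × ℝ)) (ξ : ℝ) : Set ℝ := {η | η ∈ Set.Ico (0 : ℝ) 2 ∧ (ξ, η) ∈ Λ}

/-- `Π^k(Λ)` for `k < n`: points of `Π(Λ)` whose `Img` has exactly `k` elements. -/
def projExact (Λ : Set (ℝ × ℝ)) (k : ℕ) : Set ℝ :=
  {ξ | ξ ∈ proj Λ ∧ (Img Λ ξ).encard = k}

/-- `Π^n(Λ)`: points of `Π(Λ)` whose `Img` has at least `n` elements. -/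
def projAtLeast (Λ : Set (ℝ × ℝ)) (n : ℕ) : Set ℝ :=
  {ξ | ξ ∈ proj Λ ∧ (n : ℕ∞) ≤ (Img Λ ξ).encard}

/-- `ψ ∈ P^{E,ξ}_l` : there are an open interval `I ∋ ξ` and `φ_1,…,φ_{l-1} ∈ L¹(ℝ)` with
`φ̂_1 + φ̂_2 ψ + ⋯ + φ̂_{l-1} ψ^{l-2} + ψ^{l-1} = 0` on `I ∩ E`. -/
def Pmem (E : Set ℝ) (ξ : ℝ) (l : ℕ) (ψ : ℝ → ℂ) : Prop :=
  ∃ a b : ℝ, ξ ∈ Set.Ioo a b ∧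
    ∃ φ : Fin (l - 1) → ℝ → ℂ, (∀ i, Integrable (φ i)) ∧
      ∀ x ∈ Set.Ioo a b ∩ E,
        (∑ i : Fin (l - 1), FT (φ i) x * ψ x ^ (i : ℕ)) + ψ x ^ (l - 1) = 0

/-- `Π^{1*}(Λ)`: those `ξ ∈ Π^1(Λ)` such that `χ ∈ P^{Π^1(Λ),ξ}_n`, where
`χ(ξ') = e^{πiη}` with `η` the unique element of `Img(ξ')`. -/
def projOneStar (Λ : Set (ℝ × ℝ)) (n : ℕ) : Set ℝ :=
  {ξ | ξ ∈ projExact Λ 1 ∧ ∃ χ : ℝ → ℂ,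
    (∀ ξ' ∈ projExact Λ 1, ∀ η ∈ Img Λ ξ', χ ξ' = cexpEta η) ∧
    Pmem (projExact Λ 1) ξ n χ}

/-- `Π^{k*}_{su}(Λ)`. -/
def projStarSu (Λ : Set (ℝ × ℝ)) (n k : ℕ) : Set ℝ :=
  {ξ | ξ ∈ projExact Λ k ∧ ∃ a b : ℝ, ξ ∈ Set.Ioo a b ∧
    ∃ φ : Fin (n - 1) → ℝ → ℂ, (∀ i, Integrable (φ i)) ∧
      ∀ ξ' ∈ Set.Ioo a b ∩ projExact Λ k, ∀ η ∈ Img Λ ξ',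
        (∑ i : Fin (n - 1), FT (φ i) ξ' * cexpEta η ^ (i : ℕ)) = -(cexpEta η ^ (n - 1))}

/-- `Π^{k*}_{ne}(Λ)` for `k ≥ 2`. -/
def projStarNe (Λ : Set (ℝ × ℝ)) (k : ℕ) : Set ℝ :=
  {ξ | ξ ∈ projExact Λ k ∧ ∃ a b : ℝ, ξ ∈ Set.Ioo a b ∧
    ∃ φ : Fin k → ℝ → ℂ, (∀ i, Integrable (φ i)) ∧
      ∀ ξ' ∈ Set.Ioo a b ∩ projExact Λ k, ∀ η ∈ Img Λ ξ',
        (∑ i : Fin k, FT (φ i) ξ' * cexpEta η ^ (i : ℕ)) = -(cexpEta η ^ k)}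

/-- `(Γ, Λ)` with `Γ = ℝ × {0,…,n-1}` is a Heisenberg uniqueness pair: every admissible
measure `μ = Σ_m (x ↦ (x,m))_*(f_m dx)` (with each `f_m ∈ L¹(ℝ)`) whose Fourier transform
`μ̂(ξ,η) = Σ_m e^{mπiη} f̂_m(ξ)` vanishes on `Λ` must be zero, i.e. each `f_m = 0` a.e. -/
def IsHUP (n : ℕ) (Λ : Set (ℝ × ℝ)) : Prop :=
  ∀ f : Fin n → ℝ → ℂ, (∀ m, Integrable (f m)) →
    (∀ ξ η : ℝ, (ξ, η) ∈ Λ → ∑ m : Fin n, cexpEta η ^ (m : ℕ) * FT (f m) ξ = 0) →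
    ∀ m, f m =ᵐ[volume] (0 : ℝ → ℂ)

/-! Near `ξ₀` the vanishing condition says that `χ` is a root of a polynomial `P` of degree `< n`
over the ring of local Fourier transforms. If some `f̂_j(ξ₀) ≠ 0`, then `P(ξ₀, ·) ≠ 0` and `χ(ξ₀)`
is a root of it of some multiplicity `m ≤ n - 1`. Weierstrass preparation makes `χ`, which is
continuous because `Λ` is closed and periodic, a root of a monic polynomial of degree `m` over the
same ring; multiplied by `X ^ (n - 1 - m)`, it witnesses `ξ₀ ∈ Π^{1*}(Λ)`.

In Weierstrass preparation, with `P` translated to `χ(ξ₀) = 0` and normalised, its roots satisfy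
`z ^ m = ∑ a_j z ^ j` with `a_j(ξ₀) = 0` for `j ≤ m`. An `L¹` function whose transform vanishes at
`ξ₀` can be replaced, without changing the transform near `ξ₀`, by one of arbitrarily small norm.
On a small disc, dropping the terms of degree `< m` and replacing one factor `z ^ m` of the others
by `∑ a_j z ^ j` is then a strict contraction `S` of the absolutely convergent power series with
coefficients in `L¹`, and the terms of `(1 - S)⁻¹ (z ^ m)` of degree `< m` add up to `z ^ m` at the
roots.
-/

open Filter Topology
open scoped FourierTransform lp NNReal

section WeierstrassDivision

variable {ι 𝕜 A B : Type*} [NontriviallyNormedField 𝕜] [NormedAddCommGroup A] [NormedSpace 𝕜 A]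
  [NormedAddCommGroup B] [NormedSpace 𝕜 B] [CompleteSpace B]

theorem hasSum_const_mul_norm_l1 (C : ℝ) (h : ℓ¹(ι, A)) : HasSum (fun k ↦ C * ‖h k‖) (C * ‖h‖) := by
  simpa using (lp.hasSum_norm (by simp) h).mul_left C

/-- The operator `h ↦ ∑ k, U k (h k)` on `ℓ¹(ι, A)` given by a bounded family `U` of operators: the
universal property of `ℓ¹` as a coproduct of Banach spaces. -/
noncomputable def l1Lift (U : ι → A →L[𝕜] B) (C : ℝ≥0) (hU : ∀ k, ‖U k‖ ≤ C) :
    ℓ¹(ι, A) →L[𝕜] B :=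
  have hsum (h : ℓ¹(ι, A)) : Summable fun k ↦ U k (h k) :=
    (hasSum_const_mul_norm_l1 C h).summable.of_norm_bounded
      fun k ↦ (U k).le_of_opNorm_le (hU k) _
  LinearMap.mkContinuous
    { toFun := fun h ↦ ∑' k, U k (h k)
      map_add' := fun h₁ h₂ ↦ by
        simp only [lp.coeFn_add, Pi.add_apply, map_add]
        exact (hsum h₁).tsum_add (hsum h₂)
      map_smul' := fun c h ↦ by
        simp only [lp.coeFn_smul, Pi.smul_apply, map_smul, RingHom.id_apply]
        exact (hsum h).tsum_const_smul c }
    C fun h ↦ tsum_of_norm_bounded (hasSum_const_mul_norm_l1 C h)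
      fun k ↦ (U k).le_of_opNorm_le (hU k) _

theorem norm_l1Lift_le (U : ι → A →L[𝕜] B) (C : ℝ≥0) (hU : ∀ k, ‖U k‖ ≤ C) :
    ‖l1Lift U C hU‖ ≤ C :=
  LinearMap.mkContinuous_norm_le _ C.2 fun h ↦
    tsum_of_norm_bounded (hasSum_const_mul_norm_l1 C h) fun k ↦ (U k).le_of_opNorm_le (hU k) _

theorem l1Lift_single [DecidableEq ι] (U : ι → A →L[𝕜] B) (C : ℝ≥0) (hU : ∀ k, ‖U k‖ ≤ C)
    (k : ι) (a : A) : l1Lift U C hU (lp.single 1 k a) = U k a := by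
  refine (tsum_eq_single k fun i hi ↦ ?_).trans ?_
  · exact (congrArg (U i) (lp.single_apply_ne (E := fun _ : ι ↦ A) 1 k a hi)).trans (map_zero _)
  · exact congrArg (U k) (lp.single_apply_self (E := fun _ : ι ↦ A) 1 k a)

theorem norm_lpSingle_comp_le (M : A →L[𝕜] A) (k : ℕ) :
    ‖(lp.singleContinuousLinearMap 𝕜 (fun _ : ℕ ↦ A) 1 k).comp M‖ ≤ ‖M‖ :=
  ContinuousLinearMap.opNorm_le_bound _ (norm_nonneg _) fun a ↦ by
    simpa [lp.norm_single] using M.le_opNorm a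

/-- The operator on `ℓ¹(ℕ, A)`, read as absolutely convergent power series `∑ aₖ zᵏ`, that kills
`zᵏ` for `k < m` and substitutes `∑ j ∈ J, M j zʲ` for one factor `zᵐ` in the other monomials. -/
noncomputable def substPow [CompleteSpace A] (J : Finset ℕ) (M : ℕ → A →L[𝕜] A) (m : ℕ) :
    ℓ¹(ℕ, A) →L[𝕜] ℓ¹(ℕ, A) :=
  l1Lift
    (fun k ↦ if k < m then 0 else
      ∑ j ∈ J, (lp.singleContinuousLinearMap 𝕜 (fun _ : ℕ ↦ A) 1 (j + (k - m))).comp (M j))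
    (∑ j ∈ J, ‖M j‖₊) fun k ↦ by
      split_ifs
      · simpa using Finset.sum_nonneg fun j _ ↦ norm_nonneg (M j)
      · simpa using norm_sum_le_of_le J fun j _ ↦ norm_lpSingle_comp_le (M j) (j + (k - m))

theorem norm_substPow_le [CompleteSpace A] (J : Finset ℕ) (M : ℕ → A →L[𝕜] A) (m : ℕ) :
    ‖substPow J M m‖ ≤ ∑ j ∈ J, ‖M j‖ :=
  (norm_l1Lift_le _ _ _).trans_eq (by simp)

theorem substPow_single_of_lt [CompleteSpace A] (J : Finset ℕ) (M : ℕ → A →L[𝕜] A) {m k : ℕ}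
    (hk : k < m) (a : A) :
    substPow J M m (lp.single 1 k a) = 0 := by
  simp [substPow, l1Lift_single, hk]

theorem substPow_single_of_le [CompleteSpace A] (J : Finset ℕ) (M : ℕ → A →L[𝕜] A) {m k : ℕ}
    (hk : m ≤ k) (a : A) :
    substPow J M m (lp.single 1 k a) = ∑ j ∈ J, lp.single 1 (j + (k - m)) (M j a) := by
  simp [substPow, l1Lift_single, hk.not_gt]

/-- Evaluation `∑ aₖ zᵏ ↦ ∑ vᵏ φ(aₖ)` of power series in `ℓ¹(ℕ, A)` at a point `v` of the closed
unit disc, the coefficients being evaluated by a functional `φ`. -/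
noncomputable def l1Eval [CompleteSpace 𝕜] (φ : A →L[𝕜] 𝕜) (v : 𝕜) (hv : ‖v‖ ≤ 1) :
    ℓ¹(ℕ, A) →L[𝕜] 𝕜 :=
  l1Lift (fun k ↦ v ^ k • φ) ‖φ‖₊ fun k ↦ by
    rw [norm_smul, norm_pow]
    exact mul_le_of_le_one_left (norm_nonneg φ) (pow_le_one₀ (norm_nonneg v) hv)

theorem l1Eval_single [CompleteSpace 𝕜] (φ : A →L[𝕜] 𝕜) (v : 𝕜) (hv : ‖v‖ ≤ 1) (k : ℕ) (a : A) :
    l1Eval φ v hv (lp.single 1 k a) = v ^ k * φ a :=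
  l1Lift_single _ _ _ k a

theorem l1Eval_sub_substPow [CompleteSpace 𝕜] [CompleteSpace A] {J : Finset ℕ}
    {M : ℕ → A →L[𝕜] A} {m : ℕ} {φ : A →L[𝕜] 𝕜} {c : ℕ → 𝕜} {v : 𝕜}
    (hφ : ∀ j ∈ J, ∀ a, φ (M j a) = c j * φ a) (hv : ‖v‖ ≤ 1)
    (hvm : v ^ m = ∑ j ∈ J, c j * v ^ j) (h : ℓ¹(ℕ, A)) :
    l1Eval φ v hv (h - substPow J M m h) = ∑ k ∈ Finset.range m, v ^ k * φ (h k) := by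
  have hsingle (k : ℕ) :
      l1Eval φ v hv (lp.single 1 k (h k) - substPow J M m (lp.single 1 k (h k))) =
        if k < m then v ^ k * φ (h k) else 0 := by
    split_ifs with hk
    · rw [substPow_single_of_lt J M hk, sub_zero, l1Eval_single]
    · rw [substPow_single_of_le J M (not_lt.1 hk), map_sub, map_sum, l1Eval_single, sub_eq_zero]
      calc v ^ k * φ (h k) = v ^ m * (v ^ (k - m) * φ (h k)) := by
            rw [← mul_assoc, ← pow_add, Nat.add_sub_cancel' (not_lt.1 hk)]
        _ = ∑ j ∈ J, l1Eval φ v hv (lp.single 1 (j + (k - m)) (M j (h k))) := by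
            rw [hvm, Finset.sum_mul]
            refine Finset.sum_congr rfl fun j hj ↦ ?_
            rw [l1Eval_single, hφ j hj, pow_add]
            ring
  have hsum : HasSum
      (fun k ↦ l1Eval φ v hv (lp.single 1 k (h k) - substPow J M m (lp.single 1 k (h k))))
      (l1Eval φ v hv (h - substPow J M m h)) :=
    ((l1Eval φ v hv).comp (ContinuousLinearMap.id 𝕜 ℓ¹(ℕ, A) - substPow J M m)).hasSum
      (lp.hasSum_single (E := fun _ : ℕ ↦ A) ENNReal.one_ne_top h)
  rw [← hsum.tsum_eq, tsum_congr hsingle,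
    tsum_eq_sum fun k hk ↦ if_neg fun h ↦ hk (Finset.mem_range.2 h)]
  exact Finset.sum_congr rfl fun k hk ↦ if_pos (Finset.mem_range.1 hk)

theorem exists_remainder_of_sum_norm_lt_one [CompleteSpace 𝕜] [CompleteSpace A]
    {J : Finset ℕ} {M : ℕ → A →L[𝕜] A} (hM : ∑ j ∈ J, ‖M j‖ < 1) (m : ℕ) (a : A) :
    ∃ s : ℕ → A, ∀ (φ : A →L[𝕜] 𝕜) (c : ℕ → 𝕜) (v : 𝕜), (∀ j ∈ J, ∀ x, φ (M j x) = c j * φ x) →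
      ‖v‖ ≤ 1 → v ^ m = ∑ j ∈ J, c j * v ^ j →
        v ^ m * φ a = ∑ k ∈ Finset.range m, v ^ k * φ (s k) := by
  obtain ⟨h, hh⟩ : ∃ h, h - substPow J M m h = lp.single 1 m a := by
    let u := Units.oneSub (substPow J M m) ((norm_substPow_le J M m).trans_lt hM)
    exact ⟨u⁻¹.1 (lp.single 1 m a), congrArg (fun S ↦ S (lp.single 1 m a)) u.mul_inv⟩
  refine ⟨h, fun φ c v hφ hv hvm ↦ ?_⟩
  rw [← l1Eval_sub_substPow hφ hv hvm, hh, l1Eval_single]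

theorem exists_remainder_of_sum_norm_mul_pow_lt [CompleteSpace 𝕜] [CompleteSpace A] {J : Finset ℕ}
    {M : ℕ → A →L[𝕜] A} {m : ℕ} {ρ : 𝕜} (hρ : ρ ≠ 0)
    (hM : ∑ j ∈ J, ‖M j‖ * ‖ρ‖ ^ j < ‖ρ‖ ^ m) (a : A) :
    ∃ s : ℕ → A, ∀ (φ : A →L[𝕜] 𝕜) (c : ℕ → 𝕜) (v : 𝕜), (∀ j ∈ J, ∀ x, φ (M j x) = c j * φ x) →
      ‖v‖ ≤ ‖ρ‖ → v ^ m = ∑ j ∈ J, c j * v ^ j →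
        v ^ m * φ a = ∑ k ∈ Finset.range m, v ^ k * φ (s k) := by
  have hρ' : 0 < ‖ρ‖ := norm_pos_iff.2 hρ
  have hM' : ∑ j ∈ J, ‖(ρ ^ j / ρ ^ m) • M j‖ < 1 := by
    simp only [norm_smul, norm_div, norm_pow, div_mul_eq_mul_div, ← Finset.sum_div]
    simpa only [div_lt_one (pow_pos hρ' m), mul_comm] using hM
  obtain ⟨s, hs⟩ := exists_remainder_of_sum_norm_lt_one hM' m a
  refine ⟨fun k ↦ (ρ ^ m / ρ ^ k) • s k, fun φ c v hφ hv hvm ↦ ?_⟩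
  have hscaled := hs φ (fun j ↦ ρ ^ j / ρ ^ m * c j) (v / ρ)
    (fun j hj x ↦ by simp [hφ j hj, mul_assoc])
    (by rwa [norm_div, div_le_one hρ'])
    (by
      rw [div_pow, hvm, Finset.sum_div]
      exact Finset.sum_congr rfl fun j _ ↦ by rw [div_pow]; field_simp)
  calc v ^ m * φ a = ρ ^ m * ((v / ρ) ^ m * φ a) := by rw [div_pow]; field_simp
    _ = ∑ k ∈ Finset.range m, v ^ k * φ ((ρ ^ m / ρ ^ k) • s k) := by
      rw [hscaled, Finset.mul_sum]
      refine Finset.sum_congr rfl fun k _ ↦ ?_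
      rw [map_smul, smul_eq_mul, div_pow]
      field_simp

end WeierstrassDivision

section FourierTransform

theorem norm_cexpEta (η : ℝ) : ‖cexpEta η‖ = 1 := by
  rw [cexpEta, ← Complex.norm_exp_ofReal_mul_I (Real.pi * η)]
  congr 2
  push_cast
  ring

theorem cexpEta_add (a b : ℝ) : cexpEta (a + b) = cexpEta a * cexpEta b := by
  simp only [cexpEta, ← Complex.exp_add, Complex.ofReal_add, mul_add]

theorem continuous_cexpEta : Continuous cexpEta := by
  unfold cexpEta
  fun_prop

theorem FT_eq_integral_cexpEta (f : ℝ → ℂ) (ξ : ℝ) : FT f ξ = ∫ x, cexpEta (x * ξ) * f x := by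
  simp only [FT, cexpEta, Complex.ofReal_mul, mul_assoc]

theorem FT_eq_fourier (f : ℝ → ℂ) (ξ : ℝ) : FT f ξ = 𝓕 f (-ξ / 2) := by
  rw [Real.fourier_real_eq_integral_exp_smul, FT]
  refine integral_congr_ae (.of_forall fun x ↦ ?_)
  simp only [smul_eq_mul]
  congr 2
  push_cast
  ring

theorem FT_congr_ae {f g : ℝ → ℂ} (h : f =ᵐ[volume] g) (ξ : ℝ) : FT f ξ = FT g ξ :=
  integral_congr_ae (h.mono fun _ hx ↦ congrArg (_ * ·) hx)

theorem FT_toL1 {f : ℝ → ℂ} (hf : Integrable f) (ξ : ℝ) : FT (hf.toL1 f) ξ = FT f ξ :=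
  FT_congr_ae hf.coeFn_toL1 ξ

theorem norm_FT_le (f : ℝ → ℂ) (ξ : ℝ) : ‖FT f ξ‖ ≤ ∫ x, ‖f x‖ := by
  rw [FT_eq_integral_cexpEta]
  refine (norm_integral_le_integral_norm _).trans_eq ?_
  simp only [norm_mul, norm_cexpEta, one_mul]

theorem integrable_cexpEta_mul {f : ℝ → ℂ} (hf : Integrable f) (ξ : ℝ) :
    Integrable fun x ↦ cexpEta (x * ξ) * f x :=
  hf.bdd_mul (c := 1) (continuous_cexpEta.comp (continuous_mul_const ξ)).aestronglyMeasurable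
    (.of_forall fun x ↦ (norm_cexpEta (x * ξ)).le)

/-- `g ↦ ĝ(ξ)` as a bounded functional on `L¹(ℝ)`. -/
noncomputable def fourierCLM (ξ : ℝ) : (ℝ →₁[volume] ℂ) →L[ℂ] ℂ :=
  LinearMap.mkContinuous
    { toFun := fun g ↦ FT g ξ
      map_add' := fun g h ↦ by
        simp only [FT_congr_ae (Lp.coeFn_add g h), FT_eq_integral_cexpEta, Pi.add_apply, mul_add]
        exact integral_add (integrable_cexpEta_mul (L1.integrable_coeFn g) ξ)
          (integrable_cexpEta_mul (L1.integrable_coeFn h) ξ)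
      map_smul' := fun c g ↦ by
        simp only [FT_congr_ae (Lp.coeFn_smul c g), FT_eq_integral_cexpEta, Pi.smul_apply,
          smul_eq_mul, mul_left_comm _ c, RingHom.id_apply]
        exact integral_const_mul c _ }
    1 fun g ↦ by simpa [L1.norm_eq_integral_norm] using norm_FT_le g ξ

theorem fourierCLM_apply (ξ : ℝ) (g : ℝ →₁[volume] ℂ) : fourierCLM ξ g = FT g ξ := rfl

/-- Translation `g ↦ g(· - y)` on `L¹(ℝ)`. -/
noncomputable def translateL1 (y : ℝ) : (ℝ →₁[volume] ℂ) →ₗᵢ[ℂ] (ℝ →₁[volume] ℂ) :=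
  Lp.compMeasurePreservingₗᵢ ℂ (-y + ·) (measurePreserving_add_left volume (-y))

theorem coeFn_translateL1 (y : ℝ) (g : ℝ →₁[volume] ℂ) :
    translateL1 y g =ᵐ[volume] fun x ↦ g (x - y) :=
  (Lp.coeFn_compMeasurePreserving g (measurePreserving_add_left volume (-y))).trans
    (.of_forall fun x ↦ by simp [sub_eq_neg_add])

theorem continuous_translateL1 (g : ℝ →₁[volume] ℂ) : Continuous fun y ↦ translateL1 y g := by
  have : Fact ((1 : ENNReal) ≠ ⊤) := ⟨ENNReal.one_ne_top⟩
  have hvadd : Continuous fun y : ℝ ↦ DomAddAct.mk (-y) +ᵥ g :=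
    (DomAddAct.continuous_mk.comp continuous_neg).vadd continuous_const
  exact hvadd

theorem FT_translateL1 (y : ℝ) (g : ℝ →₁[volume] ℂ) (ξ : ℝ) :
    FT (translateL1 y g) ξ = cexpEta (y * ξ) * FT g ξ := by
  rw [FT_congr_ae (coeFn_translateL1 y g), FT_eq_integral_cexpEta, FT_eq_integral_cexpEta,
    ← integral_const_mul, ← integral_add_right_eq_self _ y]
  refine integral_congr_ae (.of_forall fun x ↦ ?_)
  simp only [add_sub_cancel_right, add_mul, cexpEta_add]
  ring

theorem integrable_smul_translateL1 (l : ℝ) {f : ℝ → ℂ} (hf : Integrable f)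
    (g : ℝ →₁[volume] ℂ) : Integrable fun y ↦ f y • translateL1 (l * y) g :=
  hf.smul_bdd ‖g‖
    ((continuous_translateL1 g).comp (continuous_const_mul l)).aestronglyMeasurable
    (.of_forall fun y ↦ ((translateL1 (l * y)).norm_map g).le)

/-- Convolution on `L¹(ℝ)` with the image of the measure `f(y) dy` under the dilation `y ↦ l y`. -/
noncomputable def convDilateL1 (l : ℝ) (f : ℝ →₁[volume] ℂ) :
    (ℝ →₁[volume] ℂ) →L[ℂ] (ℝ →₁[volume] ℂ) :=
  LinearMap.mkContinuous
    { toFun := fun g ↦ ∫ y, f y • translateL1 (l * y) g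
      map_add' := fun g h ↦ by
        simp only [map_add, smul_add]
        exact integral_add (integrable_smul_translateL1 l (L1.integrable_coeFn f) g)
          (integrable_smul_translateL1 l (L1.integrable_coeFn f) h)
      map_smul' := fun c g ↦ by
        simp only [map_smul, smul_comm _ c, RingHom.id_apply, integral_smul] }
    ‖f‖ fun g ↦ by
      refine (norm_integral_le_integral_norm _).trans_eq ?_
      simp only [norm_smul, LinearIsometry.norm_map, integral_mul_const]
      rw [L1.norm_eq_integral_norm f]

theorem convDilateL1_apply (l : ℝ) (f g : ℝ →₁[volume] ℂ) :
    convDilateL1 l f g = ∫ y, f y • translateL1 (l * y) g := rfl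

theorem norm_convDilateL1_le (l : ℝ) (f : ℝ →₁[volume] ℂ) : ‖convDilateL1 l f‖ ≤ ‖f‖ :=
  LinearMap.mkContinuous_norm_le _ (norm_nonneg f) _

theorem FT_convDilateL1 (l : ℝ) (f g : ℝ →₁[volume] ℂ) (ξ : ℝ) :
    FT (convDilateL1 l f g) ξ = FT f (l * ξ) * FT g ξ := by
  rw [← fourierCLM_apply, convDilateL1_apply, ← ContinuousLinearMap.integral_comp_comm _
    (integrable_smul_translateL1 l (L1.integrable_coeFn f) g), FT_eq_integral_cexpEta f,
    ← integral_mul_const]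
  refine integral_congr_ae (.of_forall fun y ↦ ?_)
  simp only [map_smul, fourierCLM_apply, FT_translateL1, smul_eq_mul]
  ring_nf

theorem continuous_convDilateL1_apply (f g : ℝ →₁[volume] ℂ) :
    Continuous fun l ↦ convDilateL1 l f g :=
  continuous_of_dominated
    (fun l ↦ (integrable_smul_translateL1 l (L1.integrable_coeFn f) g).aestronglyMeasurable)
    (fun l ↦ .of_forall fun y ↦ by rw [norm_smul, LinearIsometry.norm_map])
    ((L1.integrable_coeFn f).norm.mul_const ‖g‖)
    (.of_forall fun y ↦
      ((continuous_translateL1 g).comp (continuous_mul_const y)).const_smul (f y))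

theorem convDilateL1_zero (f g : ℝ →₁[volume] ℂ) : convDilateL1 0 f g = FT f 0 • g := by
  have htranslate : translateL1 0 g = g :=
    Lp.ext ((coeFn_translateL1 0 g).trans (.of_forall fun x ↦ by simp))
  simp [convDilateL1_apply, htranslate, integral_smul_const, FT_eq_integral_cexpEta, cexpEta]

/-- The `L¹`-normalized dilation and modulation of `f` whose Fourier transform is
`ξ ↦ f̂((ξ - a) / l)`. -/
noncomputable def rescale (l a : ℝ) (f : ℝ → ℂ) (x : ℝ) : ℂ :=
  l * (cexpEta (x * -a) * f (l * x))

theorem integrable_rescale {f : ℝ → ℂ} (hf : Integrable f) {l : ℝ} (hl : l ≠ 0) (a : ℝ) :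
    Integrable (rescale l a f) :=
  (integrable_cexpEta_mul (hf.comp_mul_left' hl) (-a)).const_mul _

theorem integral_norm_rescale {l : ℝ} (hl : 0 < l) (a : ℝ) (f : ℝ → ℂ) :
    ∫ x, ‖rescale l a f x‖ = ∫ x, ‖f x‖ := by
  simp only [rescale, norm_mul, norm_cexpEta, one_mul, Complex.norm_real, integral_const_mul]
  rw [Measure.integral_comp_mul_left (fun x ↦ ‖f x‖)]
  simp [abs_of_pos hl, hl.ne']

theorem FT_rescale {l : ℝ} (hl : 0 < l) (a : ℝ) (f : ℝ → ℂ) (ξ : ℝ) :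
    FT (rescale l a f) ξ = FT f ((ξ - a) / l) := by
  have hintegrand (x : ℝ) : cexpEta (x * ξ) * rescale l a f x =
      l • (cexpEta (l * x * ((ξ - a) / l)) * f (l * x)) := by
    rw [rescale, ← mul_div_assoc, mul_assoc l, mul_div_cancel_left₀ _ hl.ne', sub_eq_add_neg,
      mul_add, cexpEta_add, Complex.real_smul]
    ring
  simp only [FT_eq_integral_cexpEta, hintegrand, integral_smul]
  rw [Measure.integral_comp_mul_left (fun x ↦ cexpEta (x * ((ξ - a) / l)) * f x),
    abs_of_pos (inv_pos.2 hl), smul_inv_smul₀ hl.ne']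

theorem exists_FT_eventuallyEq_one_zero :
    ∃ g : ℝ →₁[volume] ℂ, FT g =ᶠ[𝓝 0] fun _ ↦ 1 := by
  let b : ContDiffBump (0 : ℝ) := ⟨1, 2, one_pos, one_lt_two⟩
  have hcompact : HasCompactSupport fun x ↦ (b x : ℂ) :=
    b.hasCompactSupport.comp_left (g := fun x : ℝ ↦ (x : ℂ)) Complex.ofReal_zero
  let S : SchwartzMap ℝ ℂ := hcompact.toSchwartzMap (Complex.ofRealCLM.contDiff.comp b.contDiff)
  have hFT (ξ : ℝ) : FT (𝓕⁻ S : SchwartzMap ℝ ℂ) ξ = b (-ξ / 2) := by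
    rw [FT_eq_fourier, ← SchwartzMap.fourier_coe, FourierTransform.fourier_fourierInv_eq]
    rfl
  refine ⟨(𝓕⁻ S : SchwartzMap ℝ ℂ).integrable.toL1 _, ?_⟩
  filter_upwards [Metric.closedBall_mem_nhds (0 : ℝ) one_pos] with ξ hξ
  rw [FT_toL1, hFT, b.one_of_mem_closedBall, Complex.ofReal_one]
  have : |ξ| ≤ 1 := by simpa using hξ
  simpa [abs_div] using by linarith

theorem tendsto_sub_div_nhds_zero (l ξ₀ : ℝ) : Tendsto (fun ξ : ℝ ↦ (ξ - ξ₀) / l) (𝓝 ξ₀) (𝓝 0) := by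
  have hcont : Continuous fun ξ : ℝ ↦ (ξ - ξ₀) / l := by fun_prop
  simpa using hcont.tendsto ξ₀

theorem exists_FT_eventuallyEq_one (ξ₀ : ℝ) :
    ∃ g : ℝ →₁[volume] ℂ, FT g =ᶠ[𝓝 ξ₀] fun _ ↦ 1 := by
  obtain ⟨T, hT⟩ := exists_FT_eventuallyEq_one_zero
  refine ⟨(integrable_rescale (L1.integrable_coeFn T) one_ne_zero ξ₀).toL1 _, ?_⟩
  filter_upwards [(tendsto_sub_div_nhds_zero 1 ξ₀).eventually hT] with ξ hξ
  rw [FT_toL1, FT_rescale one_pos, hξ]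

theorem exists_norm_lt_and_FT_eventuallyEq {ξ₀ : ℝ} (f : ℝ →₁[volume] ℂ) (hf : FT f ξ₀ = 0)
    {ε : ℝ} (hε : 0 < ε) : ∃ g : ℝ →₁[volume] ℂ, ‖g‖ < ε ∧ FT g =ᶠ[𝓝 ξ₀] FT f := by
  -- The transform `ξ ↦ f̂(ξ) T̂((ξ - ξ₀) / l)` equals `f̂` near `ξ₀`. Up to a
  -- translation by `ξ₀` and a dilation it belongs to `convDilateL1 l f₀ T`, which tends to
  -- `f̂(ξ₀) T = 0` in `L¹` as `l → 0`.
  obtain ⟨T, hT⟩ := exists_FT_eventuallyEq_one_zero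
  let f₀ := (integrable_rescale (L1.integrable_coeFn f) one_ne_zero (-ξ₀)).toL1 _
  have hf₀ (ξ : ℝ) : FT f₀ ξ = FT f (ξ + ξ₀) := by
    rw [FT_toL1, FT_rescale one_pos, div_one, sub_neg_eq_add]
  have hsmall : ∀ᶠ l in 𝓝[>] 0, ‖convDilateL1 l f₀ T‖ < ε := by
    have hlim := (continuous_convDilateL1_apply f₀ T).norm.tendsto 0
    rw [convDilateL1_zero, hf₀, zero_add, hf, zero_smul, norm_zero] at hlim
    exact (hlim.eventually_lt_const hε).filter_mono nhdsWithin_le_nhds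
  obtain ⟨l, hlε, hl⟩ := (hsmall.and self_mem_nhdsWithin).exists
  refine ⟨(integrable_rescale (L1.integrable_coeFn (convDilateL1 l f₀ T)) hl.ne' ξ₀).toL1 _, ?_, ?_⟩
  · rwa [L1.norm_of_fun_eq_integral_norm, integral_norm_rescale hl, ← L1.norm_eq_integral_norm]
  · filter_upwards [(tendsto_sub_div_nhds_zero l ξ₀).eventually hT] with ξ hξ
    rw [FT_toL1, FT_rescale hl, FT_convDilateL1, hξ, mul_one, hf₀, mul_div_cancel₀ _ hl.ne',
      sub_add_cancel]

end FourierTransform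

section LocalFourierAlgebra

/-- The functions on `ℝ` that coincide near `ξ₀` with the Fourier transform of some element of
`L¹(ℝ)`. -/
noncomputable def localFourierAlgebra (ξ₀ : ℝ) : Subalgebra ℂ (ℝ → ℂ) where
  carrier := {F | ∃ g : ℝ →₁[volume] ℂ, FT g =ᶠ[𝓝 ξ₀] F}
  mul_mem' := by
    rintro F G ⟨f, hf⟩ ⟨g, hg⟩
    refine ⟨convDilateL1 1 f g, ?_⟩
    filter_upwards [hf, hg] with ξ hfξ hgξ
    rw [FT_convDilateL1, one_mul, hfξ, hgξ, Pi.mul_apply]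
  add_mem' := by
    rintro F G ⟨f, hf⟩ ⟨g, hg⟩
    refine ⟨f + g, ?_⟩
    filter_upwards [hf, hg] with ξ hfξ hgξ
    rw [← fourierCLM_apply, map_add, fourierCLM_apply, fourierCLM_apply, hfξ, hgξ, Pi.add_apply]
  algebraMap_mem' c := by
    obtain ⟨g, hg⟩ := exists_FT_eventuallyEq_one ξ₀
    refine ⟨c • g, ?_⟩
    filter_upwards [hg] with ξ hξ
    rw [← fourierCLM_apply, map_smul, fourierCLM_apply, hξ, Pi.algebraMap_apply]
    simp

/-- The element `f̂` of `localFourierAlgebra ξ₀`. -/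
noncomputable def localFT (ξ₀ : ℝ) (f : ℝ →₁[volume] ℂ) : localFourierAlgebra ξ₀ :=
  ⟨FT f, f, EventuallyEq.rfl⟩

/-- Evaluation at `ξ` of the functions in `localFourierAlgebra ξ₀`. -/
noncomputable def evalAt (ξ₀ ξ : ℝ) : localFourierAlgebra ξ₀ →+* ℂ :=
  (Pi.evalRingHom (fun _ : ℝ ↦ ℂ) ξ).comp (localFourierAlgebra ξ₀).val.toRingHom

theorem evalAt_algebraMap (ξ₀ ξ : ℝ) (c : ℂ) : evalAt ξ₀ ξ (algebraMap ℂ _ c) = c := rfl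

theorem evalAt_localFT (ξ₀ ξ : ℝ) (f : ℝ →₁[volume] ℂ) : evalAt ξ₀ ξ (localFT ξ₀ f) = FT f ξ := rfl

theorem exists_FT_eventuallyEq_evalAt {ξ₀ : ℝ} (F : localFourierAlgebra ξ₀) :
    ∃ g : ℝ →₁[volume] ℂ, ∀ᶠ ξ in 𝓝 ξ₀, FT g ξ = evalAt ξ₀ ξ F :=
  F.2

theorem exists_norm_lt_and_FT_eventuallyEq_evalAt {ξ₀ : ℝ} {F : localFourierAlgebra ξ₀}
    (hF : evalAt ξ₀ ξ₀ F = 0) {ε : ℝ} (hε : 0 < ε) :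
    ∃ g : ℝ →₁[volume] ℂ, ‖g‖ < ε ∧ ∀ᶠ ξ in 𝓝 ξ₀, FT g ξ = evalAt ξ₀ ξ F := by
  obtain ⟨f, hf⟩ := F.2
  obtain ⟨g, hg, hgf⟩ := exists_norm_lt_and_FT_eventuallyEq f (hf.eq_of_nhds.trans hF) hε
  exact ⟨g, hg, hgf.trans hf⟩

theorem exists_pos_lt_one_forall_mul_lt {ι : Type*} (s : Finset ι) (c : ι → ℝ) {δ : ℝ}
    (hδ : 0 < δ) : ∃ ρ : ℝ, 0 < ρ ∧ ρ < 1 ∧ ∀ j ∈ s, c j * ρ < δ := by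
  have hlt (j : ι) : ∀ᶠ ρ in 𝓝 0, c j * ρ < δ :=
    (continuous_const_mul (c j)).tendsto 0 |>.eventually_lt_const (by simpa using hδ)
  have hsmall : ∀ᶠ ρ in 𝓝[>] (0 : ℝ), ρ < 1 ∧ ∀ j ∈ s, c j * ρ < δ :=
    nhdsWithin_le_nhds ((gt_mem_nhds one_pos).and
      ((eventually_all_finset s).2 fun j _ ↦ hlt j))
  obtain ⟨ρ, hρ, hpos⟩ := (hsmall.and self_mem_nhdsWithin).exists
  exact ⟨ρ, hpos, hρ⟩

theorem exists_sum_norm_mul_pow_lt {ξ₀ : ℝ} (a : ℕ → localFourierAlgebra ξ₀) {m : ℕ}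
    (ha : ∀ j ≤ m, evalAt ξ₀ ξ₀ (a j) = 0) (d : ℕ) :
    ∃ ρ > 0, ∃ g : ℕ → ℝ →₁[volume] ℂ, ∑ j ∈ Finset.range d, ‖g j‖ * ρ ^ j < ρ ^ m ∧
      ∀ᶠ ξ in 𝓝 ξ₀, ∀ j ∈ Finset.range d, FT (g j) ξ = evalAt ξ₀ ξ (a j) := by
  choose h hh using fun j ↦ exists_FT_eventuallyEq_evalAt (a j)
  have hd : (0 : ℝ) < d + 1 := by positivity
  obtain ⟨ρ, hρ, hρ1, hρsmall⟩ :=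
    exists_pos_lt_one_forall_mul_lt (Finset.range d) (fun j ↦ ‖h j‖) (one_div_pos.2 hd)
  have hrep : ∀ j ∈ Finset.range d, ∃ g : ℝ →₁[volume] ℂ, ‖g‖ * ρ ^ j < ρ ^ m / (d + 1) ∧
      ∀ᶠ ξ in 𝓝 ξ₀, FT g ξ = evalAt ξ₀ ξ (a j) := by
    intro j hj
    rcases le_or_gt j m with hjm | hjm
    · obtain ⟨g, hg, hFT⟩ := exists_norm_lt_and_FT_eventuallyEq_evalAt (ha j hjm)
        (ε := ρ ^ m / (d + 1) / ρ ^ j) (by positivity)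
      exact ⟨g, (lt_div_iff₀ (pow_pos hρ j)).1 hg, hFT⟩
    · refine ⟨h j, ?_, hh j⟩
      calc ‖h j‖ * ρ ^ j ≤ ‖h j‖ * ρ ^ (m + 1) := by
            gcongr ‖h j‖ * ?_
            exact pow_le_pow_of_le_one hρ.le hρ1.le hjm
        _ = ‖h j‖ * ρ * ρ ^ m := by ring
        _ < 1 / (d + 1) * ρ ^ m := by gcongr; exact hρsmall j hj
        _ = ρ ^ m / (d + 1) := one_div_mul_eq_div _ _
  choose! g hg hFT using hrep
  refine ⟨ρ, hρ, g, ?_, (eventually_all_finset _).2 hFT⟩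
  calc ∑ j ∈ Finset.range d, ‖g j‖ * ρ ^ j ≤ ∑ j ∈ Finset.range d, ρ ^ m / (d + 1) :=
        Finset.sum_le_sum fun j hj ↦ (hg j hj).le
    _ = d * (ρ ^ m / (d + 1)) := by simp
    _ < ρ ^ m := by
        rw [mul_div_left_comm]
        exact mul_lt_of_lt_one_right (pow_pos hρ m) ((div_lt_one hd).2 (lt_add_one _))

end LocalFourierAlgebra

section WeierstrassPreparation

open Polynomial

theorem exists_monic_forall_eval_eq_pow {ξ₀ : ℝ} {A : (localFourierAlgebra ξ₀)[X]} {m : ℕ}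
    (hA : ∀ j ≤ m, evalAt ξ₀ ξ₀ (A.coeff j) = 0) :
    ∃ ρ > 0, ∃ Q : (localFourierAlgebra ξ₀)[X], Q.Monic ∧ Q.natDegree = m ∧
      ∀ᶠ ξ in 𝓝 ξ₀, ∀ v : ℂ, ‖v‖ ≤ ρ → (A.map (evalAt ξ₀ ξ)).eval v = v ^ m →
        (Q.map (evalAt ξ₀ ξ)).eval v = 0 := by
  obtain ⟨ρ, hρ, g, hgρ, hg⟩ := exists_sum_norm_mul_pow_lt A.coeff hA (A.natDegree + 1)
  obtain ⟨u, hu⟩ := exists_FT_eventuallyEq_one ξ₀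
  have hρnorm : ‖(ρ : ℂ)‖ = ρ := by simp [hρ.le]
  have hM : ∑ j ∈ Finset.range (A.natDegree + 1), ‖convDilateL1 1 (g j)‖ * ‖(ρ : ℂ)‖ ^ j <
      ‖(ρ : ℂ)‖ ^ m := by
    rw [hρnorm]
    refine (Finset.sum_le_sum fun j _ ↦ ?_).trans_lt hgρ
    gcongr
    exact norm_convDilateL1_le 1 (g j)
  obtain ⟨s, hs⟩ := exists_remainder_of_sum_norm_mul_pow_lt (Complex.ofReal_ne_zero.2 hρ.ne') hM u
  have hdegree := degree_sum_fin_lt fun i : Fin m ↦ localFT ξ₀ (s i)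
  refine ⟨ρ, hρ, X ^ m - ∑ i : Fin m, C (localFT ξ₀ (s i)) * X ^ (i : ℕ), monic_X_pow_sub hdegree,
    ?_, ?_⟩
  · refine natDegree_eq_of_degree_eq_some ?_
    rw [degree_sub_eq_left_of_degree_lt (by rwa [degree_X_pow]), degree_X_pow]
  filter_upwards [hg, hu] with ξ hgξ huξ v hv hroot
  have hremainder := hs (fourierCLM ξ) (fun j ↦ evalAt ξ₀ ξ (A.coeff j)) v
    (fun j hj f ↦ by
      rw [fourierCLM_apply, FT_convDilateL1, one_mul, hgξ j hj, fourierCLM_apply])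
    (hv.trans_eq hρnorm.symm) (by rw [← hroot, eval_map, eval₂_eq_sum_range])
  simp only [fourierCLM_apply, huξ, mul_one, Finset.sum_range] at hremainder
  simp only [Polynomial.map_sub, Polynomial.map_pow, map_X, Polynomial.map_sum, Polynomial.map_mul,
    map_C, eval_sub, eval_pow, eval_X, eval_finsetSum, eval_mul, eval_C, evalAt_localFT,
    hremainder, sub_eq_zero]
  exact Finset.sum_congr rfl fun i _ ↦ mul_comm _ _

theorem exists_monic_forall_isRoot_of_norm_le {ξ₀ : ℝ} {P : (localFourierAlgebra ξ₀)[X]}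
    (hP : P.map (evalAt ξ₀ ξ₀) ≠ 0) :
    ∃ ρ > 0, ∃ Q : (localFourierAlgebra ξ₀)[X], Q.Monic ∧
      Q.natDegree = (P.map (evalAt ξ₀ ξ₀)).natTrailingDegree ∧
      ∀ᶠ ξ in 𝓝 ξ₀, ∀ v : ℂ, ‖v‖ ≤ ρ → (P.map (evalAt ξ₀ ξ)).IsRoot v →
        (Q.map (evalAt ξ₀ ξ)).IsRoot v := by
  set m := (P.map (evalAt ξ₀ ξ₀)).natTrailingDegree with hm
  have hc : evalAt ξ₀ ξ₀ (P.coeff m) ≠ 0 := by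
    rwa [← coeff_map, hm, coeff_natTrailingDegree_ne_zero]
  let A := X ^ m - C (algebraMap ℂ _ (evalAt ξ₀ ξ₀ (P.coeff m))⁻¹) * P
  have hA : ∀ j ≤ m, evalAt ξ₀ ξ₀ (A.coeff j) = 0 := by
    intro j hj
    simp only [A, coeff_sub, coeff_X_pow, coeff_C_mul, map_sub, map_mul, evalAt_algebraMap]
    rcases hj.eq_or_lt with rfl | hlt
    · simp [hc]
    · have hcoeff : evalAt ξ₀ ξ₀ (P.coeff j) = 0 := by
        rw [← coeff_map, coeff_eq_zero_of_lt_natTrailingDegree hlt]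
      simp [hlt.ne, hcoeff]
  obtain ⟨ρ, hρ, Q, hQ, hQm, hroot⟩ := exists_monic_forall_eval_eq_pow hA
  refine ⟨ρ, hρ, Q, hQ, hQm, hroot.mono fun ξ hξ v hv hPv ↦ hξ v hv ?_⟩
  simp [A, hPv.eq_zero]

theorem exists_monic_eventually_isRoot {ξ₀ : ℝ} {P : (localFourierAlgebra ξ₀)[X]}
    (hP : P.map (evalAt ξ₀ ξ₀) ≠ 0) (z₀ : ℂ) :
    ∃ Q : (localFourierAlgebra ξ₀)[X], Q.Monic ∧
      Q.natDegree = (P.map (evalAt ξ₀ ξ₀)).rootMultiplicity z₀ ∧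
      ∀ᶠ p : ℝ × ℂ in 𝓝 (ξ₀, z₀), (P.map (evalAt ξ₀ p.1)).IsRoot p.2 →
        (Q.map (evalAt ξ₀ p.1)).IsRoot p.2 := by
  have hmap (r : ℂ) (ξ : ℝ) (F : (localFourierAlgebra ξ₀)[X]) :
      (taylor (algebraMap ℂ _ r) F).map (evalAt ξ₀ ξ) = taylor r (F.map (evalAt ξ₀ ξ)) := by
    rw [map_taylor, evalAt_algebraMap]
  obtain ⟨ρ, hρ, Q, hQ, hQdeg, hroot⟩ := exists_monic_forall_isRoot_of_norm_le
    (P := taylor (algebraMap ℂ _ z₀) P) (by rwa [hmap, ne_eq, taylor_eq_zero])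
  refine ⟨taylor (algebraMap ℂ _ (-z₀)) Q, ?_, ?_, ?_⟩
  · rwa [Monic, leadingCoeff_taylor]
  · rw [natDegree_taylor, hQdeg, hmap, rootMultiplicity_eq_natTrailingDegree, taylor_apply]
  · rw [nhds_prod_eq]
    filter_upwards [hroot.prod_mk (Metric.closedBall_mem_nhds z₀ hρ)] with p hp hPp
    rw [hmap, IsRoot, taylor_eval, ← sub_eq_add_neg]
    refine hp.1 _ ?_ ?_
    · simpa [dist_eq_norm] using hp.2
    · rwa [hmap, IsRoot, taylor_eval, sub_add_cancel]

theorem exists_monic_natDegree_eq_eventually_isRoot {ξ₀ : ℝ} {P : (localFourierAlgebra ξ₀)[X]}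
    (hP : P.map (evalAt ξ₀ ξ₀) ≠ 0) {N : ℕ} (hN : P.natDegree ≤ N) {E : Set ℝ} {χ : ℝ → ℂ}
    (hχ : ContinuousWithinAt χ E ξ₀)
    (hroot : ∀ ξ ∈ E, (P.map (evalAt ξ₀ ξ)).IsRoot (χ ξ)) :
    ∃ Q : (localFourierAlgebra ξ₀)[X], Q.Monic ∧ Q.natDegree = N ∧
      ∀ᶠ ξ in 𝓝[E] ξ₀, (Q.map (evalAt ξ₀ ξ)).IsRoot (χ ξ) := by
  obtain ⟨Q, hQ, hQdeg, hQroot⟩ := exists_monic_eventually_isRoot hP (χ ξ₀)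
  have hQN : Q.natDegree ≤ N := by
    rw [hQdeg, ← count_roots]
    exact (Multiset.count_le_card _ _).trans
      ((card_roots' _).trans (natDegree_map_le.trans hN))
  refine ⟨X ^ (N - Q.natDegree) * Q, (monic_X_pow _).mul hQ, ?_, ?_⟩
  · rw [(monic_X_pow _).natDegree_mul hQ, natDegree_X_pow, Nat.sub_add_cancel hQN]
  · have hgraph : Tendsto (fun ξ ↦ (ξ, χ ξ)) (𝓝[E] ξ₀) (𝓝 (ξ₀, χ ξ₀)) :=
      (tendsto_id.mono_right nhdsWithin_le_nhds).prodMk_nhds hχ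
    filter_upwards [hgraph.eventually hQroot, self_mem_nhdsWithin] with ξ hξ hξE
    rw [Polynomial.map_mul]
    exact root_mul_left_of_isRoot _ (hξ (hroot ξ hξE))

theorem pmem_of_monic {ξ₀ : ℝ} {Q : (localFourierAlgebra ξ₀)[X]} (hQ : Q.Monic) {E : Set ℝ}
    {χ : ℝ → ℂ} {n : ℕ} (hn : Q.natDegree = n - 1)
    (hroot : ∀ᶠ ξ in 𝓝[E] ξ₀, (Q.map (evalAt ξ₀ ξ)).IsRoot (χ ξ)) :
    Pmem E ξ₀ n χ := by
  choose φ hφ using fun i ↦ exists_FT_eventuallyEq_evalAt (Q.coeff i)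
  have hcoeff : ∀ᶠ ξ in 𝓝 ξ₀, ∀ i ∈ Finset.range (n - 1), FT (φ i) ξ = evalAt ξ₀ ξ (Q.coeff i) :=
    (eventually_all_finset _).2 fun i _ ↦ hφ i
  obtain ⟨a, b, hab, hsub⟩ :=
    mem_nhds_iff_exists_Ioo_subset.1 ((eventually_nhdsWithin_iff.1 hroot).and hcoeff)
  refine ⟨a, b, hab, fun i ↦ φ i, fun i ↦ L1.integrable_coeFn (φ i), fun ξ ⟨hξ, hξE⟩ ↦ ?_⟩
  obtain ⟨hξroot, hξcoeff⟩ := hsub hξ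
  have hzero := (hξroot hξE).eq_zero
  rw [eval_map, eval₂_eq_sum_range, Finset.sum_range_succ, hQ.coeff_natDegree, map_one, one_mul,
    hn, Finset.sum_range] at hzero
  rw [← hzero]
  congr 1
  exact Finset.sum_congr rfl fun i _ ↦ by rw [hξcoeff i (Finset.mem_range.2 i.2)]

theorem pmem_of_sum_pow_mul_FT_eq_zero {n : ℕ} {f : Fin n → ℝ → ℂ} (hf : ∀ j, Integrable (f j))
    {ξ₀ : ℝ} (hne : ∃ j, FT (f j) ξ₀ ≠ 0) {E : Set ℝ} {χ : ℝ → ℂ}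
    (hχ : ContinuousWithinAt χ E ξ₀)
    (hsum : ∀ ξ ∈ E, ∑ j : Fin n, χ ξ ^ (j : ℕ) * FT (f j) ξ = 0) :
    Pmem E ξ₀ n χ := by
  classical
  obtain ⟨j, hj⟩ := hne
  obtain ⟨c, hc⟩ : ∃ c : Fin n → localFourierAlgebra ξ₀, ∀ i ξ, evalAt ξ₀ ξ (c i) = FT (f i) ξ :=
    ⟨fun i ↦ localFT ξ₀ ((hf i).toL1 (f i)), fun i ξ ↦ FT_toL1 (hf i) ξ⟩
  have hdegree : (ofFn n c).natDegree ≤ n - 1 := Nat.le_sub_one_of_lt (ofFn_natDegree_lt j.pos c)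
  have hP : (ofFn n c).map (evalAt ξ₀ ξ₀) ≠ 0 := fun hzero ↦ hj <| by
    simpa [hc] using congrArg (coeff · (j : ℕ)) hzero
  have hroot : ∀ ξ ∈ E, ((ofFn n c).map (evalAt ξ₀ ξ)).IsRoot (χ ξ) := fun ξ hξ ↦ by
    simpa [ofFn_eq_sum_monomial, Polynomial.map_sum, eval_finsetSum, hc, mul_comm] using hsum ξ hξ
  obtain ⟨Q, hQ, hQdeg, hQroot⟩ :=
    exists_monic_natDegree_eq_eventually_isRoot hP hdegree hχ hroot
  exact pmem_of_monic hQ hQdeg hQroot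

end WeierstrassPreparation

section FiberCoordinate

theorem cexpEta_two : cexpEta 2 = cexpEta 0 := by
  rw [cexpEta, cexpEta, Complex.ofReal_ofNat, mul_comm _ (2 : ℂ), ← mul_assoc,
    Complex.exp_two_pi_mul_I, Complex.ofReal_zero, mul_zero, Complex.exp_zero]

theorem exists_forall_mem_Img_eq_cexpEta (Λ : Set (ℝ × ℝ)) :
    ∃ χ : ℝ → ℂ, ∀ ξ ∈ projExact Λ 1, ∀ η ∈ Img Λ ξ, χ ξ = cexpEta η := by
  have hunique : ∀ ξ ∈ projExact Λ 1, ∃ z : ℂ, ∀ η ∈ Img Λ ξ, z = cexpEta η := by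
    intro ξ hξ
    obtain ⟨η₀, hη₀⟩ := Set.encard_eq_one.1 (hξ.2.trans Nat.cast_one)
    exact ⟨cexpEta η₀, by simp [hη₀]⟩
  choose! χ hχ using hunique
  exact ⟨χ, hχ⟩

variable {Λ : Set (ℝ × ℝ)}

theorem nonempty_Img_of_mem_projExact_one {ξ : ℝ} (hξ : ξ ∈ projExact Λ 1) :
    (Img Λ ξ).Nonempty :=
  Set.encard_ne_zero.1 (by simp [hξ.2])

theorem eq_cexpEta_of_mem_Icc (hper : Periodic2 Λ) {ξ : ℝ} {z : ℂ}
    (hz : ∀ η ∈ Img Λ ξ, z = cexpEta η) {η : ℝ} (hη : η ∈ Set.Icc 0 2) (hΛ : (ξ, η) ∈ Λ) :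
    z = cexpEta η := by
  rcases hη.2.eq_or_lt with rfl | hlt
  · rw [cexpEta_two]
    exact hz 0 ⟨by simp, (hper ξ 0).2 (by rwa [zero_add])⟩
  · exact hz η ⟨⟨hη.1, hlt⟩, hΛ⟩

theorem continuousWithinAt_of_forall_mem_Img (hclosed : IsClosed Λ) (hper : Periodic2 Λ)
    {E : Set ℝ} (hE : ∀ ξ ∈ E, (Img Λ ξ).Nonempty) {χ : ℝ → ℂ}
    (hχ : ∀ ξ ∈ E, ∀ η ∈ Img Λ ξ, χ ξ = cexpEta η) {ξ₀ : ℝ} (hξ₀ : ξ₀ ∈ E) :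
    ContinuousWithinAt χ E ξ₀ := by
  intro U hU
  have hlocal : ∀ η ∈ Set.Icc (0 : ℝ) 2, ∀ᶠ p in 𝓝 (ξ₀, η), p ∈ Λ → cexpEta p.2 ∈ U := by
    intro η hη
    by_cases hΛ : (ξ₀, η) ∈ Λ
    · rw [eq_cexpEta_of_mem_Icc hper (hχ ξ₀ hξ₀) hη hΛ] at hU
      exact ((continuous_cexpEta.comp continuous_snd).continuousAt.eventually_mem hU).mono
        fun _ hp _ ↦ hp
    · exact (hclosed.isOpen_compl.eventually_mem hΛ).mono fun _ hp hpΛ ↦ absurd hpΛ hp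
  have huniform : ∀ᶠ ξ in 𝓝 ξ₀, ∀ η ∈ Set.Icc (0 : ℝ) 2, (ξ, η) ∈ Λ → cexpEta η ∈ U :=
    isCompact_Icc.eventually_forall_of_forall_eventually hlocal
  change ∀ᶠ ξ in 𝓝[E] ξ₀, χ ξ ∈ U
  filter_upwards [nhdsWithin_le_nhds huniform, self_mem_nhdsWithin] with ξ hξ hξE
  obtain ⟨η, hη⟩ := hE ξ hξE
  rw [hχ ξ hξE η hη]
  exact hξ η (Set.Ico_subset_Icc_self hη.1) hη.2

end FiberCoordinate

theorem vanish_on_pi1 (n : ℕ) (hn : 2 ≤ n) (Λ : Set (ℝ × ℝ))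
    (hclosed : IsClosed Λ) (hper : Periodic2 Λ)
    (f : Fin n → ℝ → ℂ) (hf : ∀ m, MeasureTheory.Integrable (f m))
    (heq : ∀ ξ η : ℝ, (ξ, η) ∈ Λ →
      ∑ m : Fin n, cexpEta η ^ (m : ℕ) * FT (f m) ξ = 0)
    (ξ₀ : ℝ) (hξ₀ : ξ₀ ∈ projExact Λ 1 \ projOneStar Λ n) :
    ∀ j, FT (f j) ξ₀ = 0 := by
  obtain ⟨hmem, hnotMem⟩ := hξ₀
  obtain ⟨χ, hχ⟩ := exists_forall_mem_Img_eq_cexpEta Λ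
  have hImg : ∀ ξ ∈ projExact Λ 1, (Img Λ ξ).Nonempty :=
    fun _ ↦ nonempty_Img_of_mem_projExact_one
  have hcont : ContinuousWithinAt χ (projExact Λ 1) ξ₀ :=
    continuousWithinAt_of_forall_mem_Img hclosed hper hImg hχ hmem
  have hsum : ∀ ξ ∈ projExact Λ 1, ∑ m : Fin n, χ ξ ^ (m : ℕ) * FT (f m) ξ = 0 := by
    intro ξ hξ
    obtain ⟨η, hη⟩ := hImg ξ hξ
    rw [hχ ξ hξ η hη]
    exact heq ξ η hη.2
  by_contra! hne
  exact hnotMem ⟨hmem, χ, hχ, pmem_of_sum_pow_mul_FT_eq_zero hf hne hcont hsum⟩
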